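/- Let A and B be finite groups with coprime orders, i.e., gcd(|A|,|B|) = 1. Then o(A × B) = o(A)·o(B). Moreover, if both A and B are nontrivial, then o(A × B) ≥ 7/2. -/

import Mathlib

/-- The average element order `o(G) = ψ(G)/|G|` of a finite group `G`,
where `ψ(G) = ∑_{x ∈ G} |x|` is the sum of the orders of all elements of `G`. -/
noncomputable def avgOrder (G : Type*) [Group G] [Fintype G] : ℚ :=
  (∑ x : G, (orderOf x : ℚ)) / (Fintype.card G : ℚ)

/-!
For coprime `|A|` and `|B|` the order of `(a, b)` is `|a| * |b|`, so `ψ`, and hence `o`, is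
multiplicative. If every nonidentity element of a nontrivial group `G` has order at least `k`, then
`ψ(G) ≥ 1 + k (|G| - 1)` and `|G| ≥ k`, so `o(G) ≥ k - (k - 1) / k`, the value attained by the
cyclic group of order `k` when `k` is prime. This gives `3 / 2` for `k = 2`, and `7 / 3` for `k = 3`
when `|G|` is odd. One of two coprime orders is odd, and `3 / 2 * (7 / 3) = 7 / 2`.
-/

section Multiplicativity

variable {A B : Type*} [Group A] [Group B]

lemma orderOf_mk_of_coprime_card (h : (Nat.card A).Coprime (Nat.card B)) (a : A) (b : B) :
    orderOf (a, b) = orderOf a * orderOf b := by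
  have coprime_orders : (orderOf a).Coprime (orderOf b) :=
    h.of_dvd (orderOf_dvd_natCard a) (orderOf_dvd_natCard b)
  rw [Prod.orderOf_mk, coprime_orders.lcm_eq_mul]

variable [Fintype A] [Fintype B]

lemma sum_orderOf_prod_of_coprime_card (h : (Fintype.card A).Coprime (Fintype.card B)) :
    ∑ x : A × B, orderOf x = (∑ a : A, orderOf a) * ∑ b : B, orderOf b := by
  simp only [← Nat.card_eq_fintype_card] at h
  simp only [Fintype.sum_prod_type, orderOf_mk_of_coprime_card h, Fintype.sum_mul_sum]

lemma avgOrder_prod_eq_mul (h : (Fintype.card A).Coprime (Fintype.card B)) :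
    avgOrder (A × B) = avgOrder A * avgOrder B := by
  simp only [avgOrder, ← Nat.cast_sum, sum_orderOf_prod_of_coprime_card h, Fintype.card_prod,
    Nat.cast_mul, div_mul_div_comm]

end Multiplicativity

section LowerBounds

lemma one_add_card_sub_one_mul_le_sum_orderOf {M : Type*} [Monoid M] [Fintype M] {k : ℕ}
    (hk : ∀ x : M, x ≠ 1 → k ≤ orderOf x) :
    1 + (Fintype.card M - 1) * k ≤ ∑ x : M, orderOf x := by
  classical
  rw [← Finset.add_sum_erase Finset.univ orderOf (Finset.mem_univ (1 : M)), orderOf_one,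
    ← Finset.card_univ, ← Finset.card_erase_of_mem (Finset.mem_univ (1 : M))]
  gcongr
  exact Finset.card_nsmul_le_sum _ _ _ fun x hx ↦ hk x (Finset.ne_of_mem_erase hx)

lemma two_le_orderOf {M : Type*} [Monoid M] {x : M} (hx : IsOfFinOrder x) (hx_ne : x ≠ 1) :
    2 ≤ orderOf x := by
  have orderOf_ne_one : orderOf x ≠ 1 := mt orderOf_eq_one_iff.mp hx_ne
  have orderOf_pos : 0 < orderOf x := hx.orderOf_pos
  lia

variable {G : Type*} [Group G] [Fintype G]

lemma sub_div_card_le_avgOrder {k : ℕ} (hk : ∀ x : G, x ≠ 1 → k ≤ orderOf x) :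
    (k : ℚ) - (k - 1) / Fintype.card G ≤ avgOrder G := by
  have card_ne_zero : (Fintype.card G : ℚ) ≠ 0 := mod_cast Fintype.card_ne_zero
  have sum_bound : 1 + ((Fintype.card G : ℚ) - 1) * k ≤ ∑ x : G, (orderOf x : ℚ) := by
    have := one_add_card_sub_one_mul_le_sum_orderOf hk
    rw [← Nat.cast_pred Fintype.card_pos]
    exact_mod_cast this
  calc (k : ℚ) - (k - 1) / Fintype.card G
      = (1 + ((Fintype.card G : ℚ) - 1) * k) / Fintype.card G := by
        rw [eq_div_iff card_ne_zero, sub_mul, div_mul_cancel₀ _ card_ne_zero]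
        ring
    _ ≤ avgOrder G := by unfold avgOrder; gcongr

lemma sub_div_self_le_avgOrder [Nontrivial G] {k : ℕ} (hk_pos : 0 < k)
    (hk : ∀ x : G, x ≠ 1 → k ≤ orderOf x) :
    (k : ℚ) - (k - 1) / k ≤ avgOrder G := by
  obtain ⟨x, hx⟩ := exists_ne (1 : G)
  have k_le_card : k ≤ Fintype.card G := (hk x hx).trans orderOf_le_card_univ
  have one_le_k : (1 : ℚ) ≤ k := mod_cast hk_pos
  calc (k : ℚ) - (k - 1) / k
      ≤ k - (k - 1) / Fintype.card G := by gcongr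
    _ ≤ avgOrder G := sub_div_card_le_avgOrder hk

lemma three_le_orderOf_of_odd_card (hG : Odd (Fintype.card G)) {x : G} (hx : x ≠ 1) :
    3 ≤ orderOf x :=
  (two_le_orderOf (isOfFinOrder_of_finite x) hx).lt_of_ne' (hG.ne_two_of_dvd_nat orderOf_dvd_card)

variable [Nontrivial G]

variable (G) in
lemma three_halves_le_avgOrder : 3 / 2 ≤ avgOrder G := by
  have bound_two := sub_div_self_le_avgOrder (G := G) two_pos
    fun x ↦ two_le_orderOf (isOfFinOrder_of_finite x)
  norm_num at bound_two
  exact bound_two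

lemma seven_thirds_le_avgOrder_of_odd_card (hG : Odd (Fintype.card G)) : 7 / 3 ≤ avgOrder G := by
  have bound_three := sub_div_self_le_avgOrder three_pos
    fun _ ↦ three_le_orderOf_of_odd_card hG
  norm_num at bound_three
  exact bound_three

end LowerBounds

lemma odd_or_odd_of_coprime {m n : ℕ} (h : m.Coprime n) : Odd m ∨ Odd n := by
  by_contra! ⟨hm, hn⟩
  rw [Nat.not_odd_iff_even] at hm hn
  exact Nat.not_coprime_of_dvd_of_dvd one_lt_two hm.two_dvd hn.two_dvd h

lemma seven_halves_le_avgOrder_mul_of_odd_card {G H : Type*} [Group G] [Fintype G] [Nontrivial G]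
    [Group H] [Fintype H] [Nontrivial H] (hH : Odd (Fintype.card H)) :
    7 / 2 ≤ avgOrder G * avgOrder H :=
  calc (7 / 2 : ℚ) = 3 / 2 * (7 / 3) := by norm_num
    _ ≤ avgOrder G * avgOrder H :=
      mul_le_mul (three_halves_le_avgOrder G) (seven_thirds_le_avgOrder_of_odd_card hH)
        (by norm_num) (le_trans (by norm_num) (three_halves_le_avgOrder G))

theorem avgOrder_prod_of_coprime {A B : Type*} [Group A] [Fintype A] [Group B] [Fintype B]
    (h : Nat.Coprime (Fintype.card A) (Fintype.card B)) :
    avgOrder (A × B) = avgOrder A * avgOrder B ∧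
    (Nontrivial A → Nontrivial B → 7 / 2 ≤ avgOrder (A × B)) := by
  refine ⟨avgOrder_prod_eq_mul h, fun _ _ ↦ ?_⟩
  rw [avgOrder_prod_eq_mul h]
  obtain hA | hB := odd_or_odd_of_coprime h
  · rw [mul_comm]
    exact seven_halves_le_avgOrder_mul_of_odd_card hA
  · exact seven_halves_le_avgOrder_mul_of_odd_card hB
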